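/- arXiv:2602.19634 — 7 statements merged into one kernel-verified Lean document; each statement's English description precedes it below -/
import Mathlib

section
/- Let n ≥ 1, γ ∈ (0,1), and β_1, …, β_n ∈ ℝ with 0 ≤ β_k ≤ γ for all k and β_n = γ. Then the GSP weights satisfy 0 ≤ w_k ≤ 1 for every k = 1, …, n and ∑_{k=1}^n w_k = 1; that is, (w_1, …, w_n) is a probability vector. -/
/-- **GSP weights form a probability vector.** For `γ ∈ (0,1)` and reals
`β 0, …, β (n-1)` with `0 ≤ β k ≤ γ` and `β (n-1) = γ` (0-indexed, so the last
effective discount equals `γ`), the GSP weights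
`w k = ((1-γ)/(1-β k)) · ∏_{i<k} (γ-β i)/(1-β i)` satisfy `0 ≤ w k ≤ 1` for all `k < n`
and `∑_{k<n} w k = 1`. -/
theorem stmt_2 (n : ℕ) (hn : 1 ≤ n) (γ : ℝ) (hγ : γ ∈ Set.Ioo (0 : ℝ) 1)
    (β : ℕ → ℝ) (hβ : ∀ k < n, β k ∈ Set.Icc 0 γ) (hβn : β (n - 1) = γ) :
    (∀ k < n,
        0 ≤ ((1 - γ) / (1 - β k)) * ∏ i ∈ Finset.range k, (γ - β i) / (1 - β i) ∧
          ((1 - γ) / (1 - β k)) * ∏ i ∈ Finset.range k, (γ - β i) / (1 - β i) ≤ 1) ∧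
      ∑ k ∈ Finset.range n,
          ((1 - γ) / (1 - β k)) * ∏ i ∈ Finset.range k, (γ - β i) / (1 - β i) = 1 := by
  obtain ⟨h0, h1⟩ := hγ
  have hpos : ∀ k < n, 0 < 1 - β k := fun k hk => by
    have := (hβ k hk).2
    linarith
  have hnn : ∀ k < n,
      0 ≤ ((1 - γ) / (1 - β k)) * ∏ i ∈ Finset.range k, (γ - β i) / (1 - β i) := by
    intro k hk
    refine mul_nonneg (div_nonneg (by linarith) (hpos k hk).le) (Finset.prod_nonneg ?_)
    intro i hi
    have hi' : i < n := (Finset.mem_range.mp hi).trans hk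
    exact div_nonneg (by linarith [(hβ i hi').2]) (hpos i hi').le
  have htel : ∀ m ≤ n, ∑ k ∈ Finset.range m,
      ((1 - γ) / (1 - β k)) * ∏ i ∈ Finset.range k, (γ - β i) / (1 - β i)
        = 1 - ∏ i ∈ Finset.range m, (γ - β i) / (1 - β i) := by
    intro m
    induction m with
    | zero => simp
    | succ m ih =>
      intro hm
      rw [Finset.sum_range_succ, ih (by omega), Finset.prod_range_succ]
      have h : (1 - γ) / (1 - β m) = 1 - (γ - β m) / (1 - β m) := by
        have := (hpos m (by omega)).ne'
        rw [eq_sub_iff_add_eq, ← add_div, div_eq_one_iff_eq this]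
        ring
      rw [h]
      ring
  have hsum : ∑ k ∈ Finset.range n,
      ((1 - γ) / (1 - β k)) * ∏ i ∈ Finset.range k, (γ - β i) / (1 - β i) = 1 := by
    rw [htel n le_rfl, Finset.prod_eq_zero (i := n - 1)]
    · simp
    · exact Finset.mem_range.mpr (by omega)
    · simp [hβn]
  refine ⟨fun k hk => ⟨hnn k hk, ?_⟩, hsum⟩
  refine le_trans ?_ hsum.le
  exact Finset.single_le_sum
    (f := fun k => ((1 - γ) / (1 - β k)) * ∏ i ∈ Finset.range k, (γ - β i) / (1 - β i))
    (fun j hj => hnn j (Finset.mem_range.mp hj)) (Finset.mem_range.mpr hk)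
end

section
/- Let A be a Banach algebra over ℝ, let x ∈ A with ‖x‖ ≤ 1, and let 0 ≤ β ≤ γ < 1. Then the successor operators at the two timescales satisfy M_γ(x) = ((1-γ)/(1-β)) · M_β(x) + ((γ-β)/(1-β)) · M_β(x) · M_γ(x). -/
/-- The successor operator at discount `δ`: `M_δ(x) := (1-δ) · (1 - δ·x)⁻¹ · x`,
the operator form of the normalized successor measure. -/
noncomputable def succOp {A : Type*} [NormedRing A] [NormedAlgebra ℝ A]
    (δ : ℝ) (x : A) : A :=
  (1 - δ) • (Ring.inverse (1 - δ • x) * x)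

/-- **Two-timescale decomposition.** In a real Banach algebra, for `‖x‖ ≤ 1` and
`0 ≤ β ≤ γ < 1`, `M_γ(x) = ((1-γ)/(1-β)) • M_β(x) + ((γ-β)/(1-β)) • (M_β(x) · M_γ(x))`. -/
theorem stmt_6 {A : Type*} [NormedRing A] [NormOneClass A] [NormedAlgebra ℝ A]
    [CompleteSpace A] (x : A) (hx : ‖x‖ ≤ 1) (β γ : ℝ)
    (hβ : 0 ≤ β) (hβγ : β ≤ γ) (hγ : γ < 1) :
    succOp γ x
      = ((1 - γ) / (1 - β)) • succOp β x
        + ((γ - β) / (1 - β)) • (succOp β x * succOp γ x) := by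
  have hu : ∀ δ : ℝ, 0 ≤ δ → δ < 1 → IsUnit (1 - δ • x) := by
    intro δ h0 h1
    apply isUnit_one_sub_of_norm_lt_one
    rw [norm_smul, Real.norm_of_nonneg h0]
    nlinarith [norm_nonneg x]
  have ha := Ring.inverse_mul_cancel _ (hu β hβ (lt_of_le_of_lt hβγ hγ))
  have hb := Ring.mul_inverse_cancel _ (hu γ (hβ.trans hβγ) hγ)
  have hne : (1 - β) ≠ 0 := by linarith
  unfold succOp
  generalize Ring.inverse (1 - β • x) = a at *
  generalize Ring.inverse (1 - γ • x) = b at *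
  have key : b = a + (γ - β) • (a * x * b) := by
    have h1 : a * ((1 - β • x) - (1 - γ • x)) * b = b - a := by
      rw [mul_sub, sub_mul, ha, mul_assoc a _ b, hb, one_mul, mul_one]
    have h2 : (1 - β • x) - (1 - γ • x) = (γ - β) • x := by
      rw [sub_smul]; abel
    rw [h2, mul_smul_comm, smul_mul_assoc] at h1
    rw [h1]; abel
  have key2 : b * x = a * x + (γ - β) • (a * x * (b * x)) := by
    conv_lhs => rw [key]
    rw [add_mul, smul_mul_assoc, mul_assoc (a * x)]
  conv_lhs => rw [key2]
  simp only [smul_mul_assoc, mul_smul_comm, smul_smul, smul_add]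
  congr 2 <;> field_simp
end

section
/- Let A be a Banach algebra over ℝ, let x ∈ A with ‖x‖ ≤ 1, and let 0 ≤ β ≤ γ < 1. Then the successor operator satisfies the horizon-consistency Bellman identity M_γ(x) = (1-γ)·x + (γ·(1-γ)/(1-β)) · x · M_β(x) + (γ·(γ-β)/(1-β)) · x · M_β(x) · M_γ(x). -/
/-- **Horizon-consistency Bellman identity (operator form of Eq. (3)).** In a real Banach
algebra, for `‖x‖ ≤ 1` and `0 ≤ β ≤ γ < 1`,
`M_γ(x) = (1-γ)·x + (γ(1-γ)/(1-β))·x·M_β(x) + (γ(γ-β)/(1-β))·x·M_β(x)·M_γ(x)`. -/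
theorem stmt_7 {A : Type*} [NormedRing A] [NormOneClass A] [NormedAlgebra ℝ A]
    [CompleteSpace A] (x : A) (hx : ‖x‖ ≤ 1) (β γ : ℝ)
    (hβ : 0 ≤ β) (hβγ : β ≤ γ) (hγ : γ < 1) :
    succOp γ x
      = (1 - γ) • x
        + (γ * (1 - γ) / (1 - β)) • (x * succOp β x)
        + (γ * (γ - β) / (1 - β)) • (x * succOp β x * succOp γ x) := by
  have hb : (1 - β) ≠ 0 := by linarith
  have key : ∀ δ : ℝ, 0 ≤ δ → δ < 1 → IsUnit (1 - δ • x) := by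
    intro δ h0 h1
    apply isUnit_one_sub_of_norm_lt_one
    rw [norm_smul, Real.norm_of_nonneg h0]
    nlinarith [norm_nonneg x]
  have hB := Ring.inverse_mul_cancel _ (key β hβ (by linarith))
  have hG := Ring.mul_inverse_cancel _ (key γ (by linarith) hγ)
  unfold succOp
  generalize Ring.inverse (1 - β • x) = B at *
  generalize Ring.inverse (1 - γ • x) = G at *
  have h1 : (γ - β) • (B * x * G) = G - B := by
    have e : (γ - β) • (B * x * G) = B * (1 - β • x) * G - B * ((1 - γ • x) * G) := by
      simp only [mul_sub, sub_mul, mul_one, one_mul, mul_smul_comm, smul_mul_assoc, sub_smul,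
        mul_assoc]
      abel
    rw [e, hB, hG, one_mul, mul_one]
  have h2 : G = 1 + γ • (x * G) := by
    rw [sub_mul, one_mul, smul_mul_assoc] at hG
    rw [← hG]; abel
  have h3 : (γ * (γ - β) / (1 - β)) • (x * ((1 - β) • (B * x)) * ((1 - γ) • (G * x)))
      = (γ * (1 - γ)) • (x * ((γ - β) • (B * x * G)) * x) := by
    simp only [mul_smul_comm, smul_mul_assoc, smul_smul, mul_assoc]
    congr 1
    field_simp
  have h4 : (γ * (1 - γ) / (1 - β)) • (x * ((1 - β) • (B * x)))
      = (γ * (1 - γ)) • (x * B * x) := by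
    simp only [mul_smul_comm, smul_smul, mul_assoc]
    congr 1
    field_simp
  have h5 : G * x = x + γ • (x * G * x) := by
    conv_lhs => rw [h2]
    rw [add_mul, one_mul, smul_mul_assoc]
  rw [h3, h4, h1, h5, mul_sub x G B, sub_mul (x * G), smul_add, smul_sub, smul_smul, mul_comm γ (1 - γ)]
  abel
end

section
/- (Theorem 1, operator form.) In the GSP operator setting, the successor operator of the geometric switching policy decomposes as N_1 = ∑_{k=1}^n w_k · (M_1 · M_2 · ⋯ · M_k), where w_k := ((1-γ)/(1-β_k)) · ∏_{i=1}^{k-1} (γ-β_i)/(1-β_i) are the GSP weights. -/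
/-- Auxiliary backward recursion for the GSP operators: `gspNAux γ α x n j = N (n-1-j)`
(0-indexed), where `N (n-1) = M_γ(x (n-1))` and, for `l < n-1`,
`N l = (1 - β_l·x_l)⁻¹ · ((1-γ)·x_l + γ·α_l·x_l·N (l+1))` with `β_l = γ·(1-α_l)`. -/
noncomputable def gspNAux {A : Type*} [NormedRing A] [NormedAlgebra ℝ A]
    (γ : ℝ) (α : ℕ → ℝ) (x : ℕ → A) (n : ℕ) : ℕ → A
  | 0 => succOp γ (x (n - 1))
  | j + 1 =>
      Ring.inverse (1 - (γ * (1 - α (n - 1 - (j + 1)))) • x (n - 1 - (j + 1))) *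
        ((1 - γ) • x (n - 1 - (j + 1)) +
          (γ * α (n - 1 - (j + 1))) • (x (n - 1 - (j + 1)) * gspNAux γ α x n j))

/-- The GSP operators `N l` (0-indexed, `l = 0, …, n-1`), defined by backward recursion. -/
noncomputable def gspN {A : Type*} [NormedRing A] [NormedAlgebra ℝ A]
    (γ : ℝ) (α : ℕ → ℝ) (x : ℕ → A) (n : ℕ) (l : ℕ) : A :=
  gspNAux γ α x n (n - 1 - l)


theorem gsp_sum_step {A : Type*} [Ring A] [Algebra ℝ A] (u v : ℕ → ℝ) (M : ℕ → A) (j l : ℕ) :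
    ∑ k ∈ Finset.range (j + 1 + 1), (u (l + k) * ∏ i ∈ Finset.range k, v (l + i)) •
        ((List.range (k + 1)).map fun i => M (l + i)).prod
      = u l • M l + v l • (M l * ∑ k ∈ Finset.range (j + 1),
        (u (l + 1 + k) * ∏ i ∈ Finset.range k, v (l + 1 + i)) •
        ((List.range (k + 1)).map fun i => M (l + 1 + i)).prod) := by
  rw [Finset.sum_range_succ', add_comm]
  congr 1
  · simp
  · rw [Finset.mul_sum, Finset.smul_sum]
    refine Finset.sum_congr rfl fun k _ => ?_
    rw [Finset.prod_range_succ', List.range_succ_eq_map, List.map_cons, List.prod_cons,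
      List.map_map, mul_smul_comm, smul_smul]
    have e : ∀ i, l + 1 + i = l + (i + 1) := fun i => by omega
    have e2 : ((fun i => M (l + i)) ∘ Nat.succ) = fun i => M (l + 1 + i) := by
      funext i
      simp only [Function.comp, Nat.succ_eq_add_one, e]
    rw [e2]
    simp only [e, add_zero]
    congr 1
    ring

theorem gsp_aux {A : Type*} [NormedRing A] [NormedAlgebra ℝ A] (n : ℕ) (x : ℕ → A)
    (γ : ℝ) (hn : 1 ≤ n) (α : ℕ → ℝ) (hb : ∀ k < n, 1 - γ * (1 - α k) ≠ 0)
    (hαn : α (n - 1) = 0) (j : ℕ) : ∀ l, l + j = n - 1 →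
    gspNAux γ α x n j = ∑ k ∈ Finset.range (j + 1),
      (((fun i => (1 - γ) / (1 - γ * (1 - α i))) (l + k)) * ∏ i ∈ Finset.range k,
        (fun i => (γ - γ * (1 - α i)) / (1 - γ * (1 - α i))) (l + i)) •
        ((List.range (k + 1)).map fun i =>
          (fun i => succOp (γ * (1 - α i)) (x i)) (l + i)).prod := by
  induction j with
  | zero =>
    intro l hl
    have h1 := hb (n - 1) (by omega)
    have : l = n - 1 := by omega
    subst this
    simp only [hαn, sub_zero, mul_one] at h1
    simp [gspNAux, hαn, div_self h1]
  | succ j ih =>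
    intro l hl
    have e : n - 1 - (j + 1) = l := by omega
    have h1 := hb l (by omega)
    refine Eq.trans ?_ (gsp_sum_step (fun i => (1 - γ) / (1 - γ * (1 - α i)))
      (fun i => (γ - γ * (1 - α i)) / (1 - γ * (1 - α i)))
      (fun i => succOp (γ * (1 - α i)) (x i)) j l).symm
    rw [← ih (l + 1) (by omega), gspNAux, e]
    simp only [succOp, smul_mul_assoc, smul_smul, mul_add, mul_smul_comm, div_mul_cancel₀ _ h1,
      mul_assoc]
    congr 2
    ring

/-- **Theorem 1 (operator form): GSP successor-operator decomposition.** In the GSP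
operator setting (0-indexed), the successor operator of the geometric switching policy
decomposes as `N 0 = ∑_{k<n} w_k • (M_0 · M_1 · ⋯ · M_k)`, where
`β_i = γ·(1-α_i)`, `M_i = M_{β_i}(x_i)`, and
`w_k = ((1-γ)/(1-β_k)) · ∏_{i<k} (γ-β_i)/(1-β_i)` are the GSP weights. -/
theorem stmt_9 {A : Type*} [NormedRing A] [NormOneClass A] [NormedAlgebra ℝ A]
    [CompleteSpace A] (n : ℕ) (hn : 1 ≤ n) (x : ℕ → A) (hx : ∀ k < n, ‖x k‖ ≤ 1)
    (γ : ℝ) (hγ : γ ∈ Set.Ioo (0 : ℝ) 1)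
    (α : ℕ → ℝ) (hα : ∀ k < n, α k ∈ Set.Icc (0 : ℝ) 1) (hαn : α (n - 1) = 0) :
    gspN γ α x n 0
      = ∑ k ∈ Finset.range n,
          (((1 - γ) / (1 - γ * (1 - α k))) *
              ∏ i ∈ Finset.range k, (γ - γ * (1 - α i)) / (1 - γ * (1 - α i))) •
            ((List.range (k + 1)).map fun i => succOp (γ * (1 - α i)) (x i)).prod := by
  have hb : ∀ k < n, 1 - γ * (1 - α k) ≠ 0 := by
    intro k hk
    obtain ⟨h0, h1⟩ := hα k hk
    obtain ⟨g0, g1⟩ := hγ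
    have : 0 ≤ γ * α k := mul_nonneg g0.le h0
    have : 0 < 1 - γ * (1 - α k) := by linarith
    exact this.ne'
  have := gsp_aux n x γ hn α hb hαn (n - 1) 0 (by omega)
  rw [gspN, Nat.sub_zero, this, Nat.sub_add_cancel hn]
  simp only [zero_add]
end

section
/- (Generalized decomposition / induction hypothesis of the proof of Theorem 1.) In the GSP operator setting, for every l ∈ {1, …, n} the suffix GSP operator satisfies N_l = ∑_{k=l}^n ((1-γ)/(1-β_k)) · (∏_{i=l}^{k-1} (γ-β_i)/(1-β_i)) · (M_l · M_{l+1} · ⋯ · M_k), where the empty product (for k = l) equals 1. -/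
/-- **Generalized decomposition (induction hypothesis of the proof of Theorem 1).**
In the GSP operator setting (0-indexed), for every `l < n` the suffix GSP operator
satisfies `N l = ∑_{k=l}^{n-1} ((1-γ)/(1-β_k)) · (∏_{i=l}^{k-1} (γ-β_i)/(1-β_i)) •
(M_l · M_{l+1} · ⋯ · M_k)`, where `β_i = γ·(1-α_i)` and `M_i = M_{β_i}(x_i)`;
the empty product (for `k = l`) equals `1`. -/
theorem stmt_10 {A : Type*} [NormedRing A] [NormOneClass A] [NormedAlgebra ℝ A]
    [CompleteSpace A] (n : ℕ) (hn : 1 ≤ n) (x : ℕ → A) (hx : ∀ k < n, ‖x k‖ ≤ 1)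
    (γ : ℝ) (hγ : γ ∈ Set.Ioo (0 : ℝ) 1)
    (α : ℕ → ℝ) (hα : ∀ k < n, α k ∈ Set.Icc (0 : ℝ) 1) (hαn : α (n - 1) = 0)
    (l : ℕ) (hl : l < n) :
    gspN γ α x n l
      = ∑ k ∈ Finset.Ico l n,
          (((1 - γ) / (1 - γ * (1 - α k))) *
              ∏ i ∈ Finset.Ico l k, (γ - γ * (1 - α i)) / (1 - γ * (1 - α i))) •
            ((List.range' l (k + 1 - l)).map fun i => succOp (γ * (1 - α i)) (x i)).prod := by
  have h1 : ∀ k < n, (1 - γ * (1 - α k)) ≠ 0 := by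
    intro k hk
    have h := hα k hk
    have : γ * (1 - α k) ≤ γ * 1 := by
      apply mul_le_mul_of_nonneg_left _ hγ.1.le
      linarith [h.1]
    have := hγ.2
    intro h0
    linarith
  have key : ∀ k < n, ∀ y : A, Ring.inverse (1 - (γ * (1 - α k)) • x k) * x k * y
      = (1 - γ * (1 - α k))⁻¹ • (succOp (γ * (1 - α k)) (x k) * y) := by
    intro k hk y
    rw [succOp, smul_mul_assoc, smul_smul, inv_mul_cancel₀ (h1 k hk), one_smul]
  obtain ⟨j, hj⟩ : ∃ j, j = n - 1 - l := ⟨_, rfl⟩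
  unfold gspN
  rw [← hj]
  induction j generalizing l with
  | zero =>
    have hl' : n = l + 1 := by omega
    subst hl'
    have hl2 : α l = 0 := by simpa using hαn
    have hg : (1 - γ) ≠ 0 := by have := hγ.2; intro h; linarith
    simp [gspNAux, hl2, div_self hg]
  | succ j ih =>
    have e : n - 1 - (j + 1) = l := by omega
    rw [gspNAux, e, ih (l + 1) (by omega) (by omega), Finset.sum_eq_sum_Ico_succ_bot hl,
      mul_add, mul_smul_comm, mul_smul_comm, ← mul_assoc]
    have k1 := key l hl 1
    rw [mul_one, mul_one] at k1
    rw [key l hl, k1]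
    congr 1
    · simp [smul_smul, div_eq_mul_inv]
    · rw [Finset.mul_sum, smul_smul, Finset.smul_sum]
      apply Finset.sum_congr rfl
      intro k hk
      rw [Finset.mem_Ico] at hk
      have e2 : k + 1 - l = (k + 1 - (l + 1)) + 1 := by omega
      rw [e2, List.range'_succ, List.map_cons, List.prod_cons, mul_smul_comm, smul_smul,
        Finset.prod_eq_prod_Ico_succ_bot (show l < k by omega)]
      congr 1
      ring
end

section
/- (Lemma 1, finite-state form: unbiasedness of the GSP value estimator.) Let S be a nonempty finite set, let P_1, …, P_n be row-stochastic matrices on S, let γ ∈ (0,1), let α_1, …, α_n ∈ [0,1] with α_n = 0, and set β_k := γ·(1-α_k). Let M_k := (1-β_k)·(I - β_k·P_k)⁻¹·P_k be the successor matrices, let w_k := ((1-γ)/(1-β_k)) · ∏_{i=1}^{k-1} (γ-β_i)/(1-β_i) be the GSP weights, and let N_1 be the GSP matrix defined by the backward recursion N_n := (1-γ)·(I - γ·P_n)⁻¹·P_n and N_l := (I - β_l·P_l)⁻¹·((1-γ)·P_l + γ·α_l·P_l·N_{l+1}) for l = n-1, …, 1. Then for every reward function r : S → ℝ and initial state s_0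 ∈ S, ∑_{(s_1,…,s_n) ∈ Sⁿ} (∏_{k=1}^n M_k(s_{k-1}, s_k)) · ((1-γ)⁻¹ ∑_{k=1}^n w_k · r(s_k)) = (1-γ)⁻¹ · (N_1 r)(s_0); that is, the compositional single-sample estimator Q̂ = (1-γ)⁻¹ ∑_k w_k r(S_k⁺), where S_k⁺ is sampled by chaining the successor matrices M_1, …, M_k from s_0, is an unbiased estimate of the GSP value (1-γ)⁻¹ (N_1 r)(s_0). -/
/-- A real square matrix is row-stochastic if its entries are nonnegative and each of its
rows sums to `1`. -/
def RowStochastic {S : Type*} [Fintype S] (P : Matrix S S ℝ) : Prop :=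
  (∀ s s', 0 ≤ P s s') ∧ ∀ s, ∑ s', P s s' = 1

/-- Auxiliary backward recursion for the GSP matrices: `gspNMatAux γ α P n j = N (n-1-j)`
(0-indexed), with `N (n-1) = (1-γ) • ((1 - γ•P (n-1))⁻¹ * P (n-1))` and, for `l < n-1`,
`N l = (1 - β_l • P_l)⁻¹ * ((1-γ) • P_l + (γ·α_l) • (P_l * N (l+1)))`, `β_l = γ·(1-α_l)`. -/
noncomputable def gspNMatAux {S : Type*} [Fintype S] [DecidableEq S]
    (γ : ℝ) (α : ℕ → ℝ) (P : ℕ → Matrix S S ℝ) (n : ℕ) : ℕ → Matrix S S ℝ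
  | 0 => (1 - γ) • ((1 - γ • P (n - 1))⁻¹ * P (n - 1))
  | j + 1 =>
      (1 - (γ * (1 - α (n - 1 - (j + 1)))) • P (n - 1 - (j + 1)))⁻¹ *
        ((1 - γ) • P (n - 1 - (j + 1)) +
          (γ * α (n - 1 - (j + 1))) • (P (n - 1 - (j + 1)) * gspNMatAux γ α P n j))

/-- The GSP matrices `N l` (0-indexed, `l = 0, …, n-1`), defined by backward recursion. -/
noncomputable def gspNMat {S : Type*} [Fintype S] [DecidableEq S]
    (γ : ℝ) (α : ℕ → ℝ) (P : ℕ → Matrix S S ℝ) (n : ℕ) (l : ℕ) : Matrix S S ℝ :=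
  gspNMatAux γ α P n (n - 1 - l)

theorem gsp_mass {S : Type*} [Fintype S] (n : ℕ) : ∀ (M : ℕ → Matrix S S ℝ)
    (_ : ∀ k < n, ∀ s, ∑ s', M k s s' = 1) (s₀ : S),
    ∑ f : Fin n → S, (∏ k : Fin n, M k.val ((Fin.cons s₀ f : Fin (n + 1) → S) k.castSucc) (f k))
      = 1 := by
  induction n with
  | zero => intro M h s₀; simp
  | succ n ih =>
    intro M h s₀
    rw [← (Fin.consEquiv (fun _ : Fin (n + 1) => S)).sum_comp, Fintype.sum_prod_type]
    rw [← h 0 (Nat.succ_pos n) s₀]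
    refine Finset.sum_congr rfl fun s₁ _ => ?_
    have := ih (fun k => M (k + 1)) (fun k hk => h (k + 1) (by omega)) s₁
    simp only [Fin.consEquiv_apply, Fin.prod_univ_succ, Fin.castSucc_zero, Fin.cons_zero,
      Fin.cons_succ, Fin.val_zero, Fin.val_succ, ← Fin.succ_castSucc]
    rw [← Finset.mul_sum, this, mul_one]

theorem gsp_rec {S : Type*} [Fintype S] (n : ℕ) (M : ℕ → Matrix S S ℝ)
    (h : ∀ k < n + 1, ∀ s, ∑ s', M k s s' = 1) (a ρ : ℕ → ℝ) (r : S → ℝ) (s₀ : S) :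
    ∑ f : Fin (n + 1) → S,
      (∏ k : Fin (n + 1), M k.val ((Fin.cons s₀ f : Fin (n + 1 + 1) → S) k.castSucc) (f k)) *
        ∑ k : Fin (n + 1), (a k.val * ∏ i ∈ Finset.range k.val, ρ i) * r (f k)
    = ∑ s₁, M 0 s₀ s₁ * (a 0 * r s₁ + ρ 0 * ∑ f : Fin n → S,
      (∏ k : Fin n, M (k.val + 1) ((Fin.cons s₁ f : Fin (n + 1) → S) k.castSucc) (f k)) *
        ∑ k : Fin n, (a (k.val + 1) * ∏ i ∈ Finset.range k.val, ρ (i + 1)) * r (f k)) := by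
  rw [← (Fin.consEquiv (fun _ : Fin (n + 1) => S)).sum_comp, Fintype.sum_prod_type]
  refine Finset.sum_congr rfl fun s₁ _ => ?_
  have := gsp_mass n (fun k => M (k + 1)) (fun k hk => h (k + 1) (by omega)) s₁
  simp only [Fin.consEquiv_apply, Fin.prod_univ_succ, Fin.sum_univ_succ, Fin.castSucc_zero,
    Fin.cons_zero, Fin.cons_succ, Fin.val_zero, Fin.val_succ, ← Fin.succ_castSucc,
    Finset.prod_range_succ', Finset.range_zero, Finset.prod_empty, mul_one]
  simp only [mul_add, mul_assoc]
  rw [Finset.sum_add_distrib]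
  congr 1
  · rw [← Finset.mul_sum, ← Finset.sum_mul, this, one_mul]
  · rw [Finset.mul_sum, Finset.mul_sum]
    refine Finset.sum_congr rfl fun f _ => ?_
    simp only [Finset.mul_sum]
    refine Finset.sum_congr rfl fun k _ => ?_
    ring

theorem gsp_aux_shift {S : Type*} [Fintype S] [DecidableEq S]
    (γ : ℝ) (α : ℕ → ℝ) (P : ℕ → Matrix S S ℝ) (n : ℕ) (j : ℕ) (hj : j ≤ n) :
    gspNMatAux γ (fun k => α (k + 1)) (fun k => P (k + 1)) (n + 1) j
      = gspNMatAux γ α P (n + 1 + 1) j := by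
  induction j with
  | zero => simp [gspNMatAux]
  | succ j ih =>
    have e : n + 1 - 1 - (j + 1) + 1 = n + 1 + 1 - 1 - (j + 1) := by omega
    simp only [gspNMatAux, e, ih (by omega)]

theorem gsp_succ_row {S : Type*} [Fintype S] [DecidableEq S] (P : Matrix S S ℝ)
    (hP : RowStochastic P) (β : ℝ) (h0 : 0 ≤ β) (h1 : β < 1) (s : S) :
    ∑ s', ((1 - β) • ((1 - β • P)⁻¹ * P)) s s' = 1 := by
  have hdet : (1 - β • P).det ≠ 0 := by
    apply det_ne_zero_of_sum_row_lt_diag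
    intro k
    have hs := hP.2 k
    rw [← Finset.add_sum_erase _ _ (Finset.mem_univ k)] at hs
    have e : ∑ j ∈ Finset.univ.erase k, ‖(1 - β • P) k j‖
        = β * ∑ j ∈ Finset.univ.erase k, P k j := by
      rw [Finset.mul_sum]
      refine Finset.sum_congr rfl fun j hj => ?_
      have : k ≠ j := (Finset.ne_of_mem_erase hj).symm
      simp [Matrix.one_apply_ne this, abs_of_nonneg h0, abs_of_nonneg (hP.1 k j)]
    rw [e]
    refine lt_of_lt_of_le ?_ (le_abs_self _)
    simp only [Matrix.sub_apply, Matrix.one_apply_eq, Matrix.smul_apply, smul_eq_mul]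
    have : ∑ j ∈ Finset.univ.erase k, P k j = 1 - P k k := by linarith
    rw [this]; linarith
  have hu : IsUnit (1 - β • P).det := isUnit_iff_ne_zero.mpr hdet
  have hP1 : P.mulVec 1 = 1 := by
    ext s; simpa [Matrix.mulVec, dotProduct] using hP.2 s
  have h2 : (1 - β • P).mulVec 1 = (1 - β) • (1 : S → ℝ) := by
    rw [Matrix.sub_mulVec, Matrix.smul_mulVec, hP1, Matrix.one_mulVec, sub_smul, one_smul]
  have h3 : ((1 - β) • ((1 - β • P)⁻¹ * P)).mulVec 1 = 1 := by
    rw [Matrix.smul_mulVec, ← Matrix.mulVec_mulVec, hP1, ← Matrix.mulVec_smul, ← h2,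
      Matrix.mulVec_mulVec, Matrix.nonsing_inv_mul _ hu, Matrix.one_mulVec]
  simpa [Matrix.mulVec, dotProduct] using congrFun h3 s

theorem gsp_main {S : Type*} [Fintype S] [DecidableEq S] (γ : ℝ) (hγ : γ ∈ Set.Ioo (0 : ℝ) 1)
    (r : S → ℝ) (n : ℕ) : ∀ (P : ℕ → Matrix S S ℝ) (_ : ∀ k < n + 1, RowStochastic (P k))
    (α : ℕ → ℝ) (_ : ∀ k < n + 1, α k ∈ Set.Icc (0 : ℝ) 1) (_ : α n = 0) (s₀ : S),
    ∑ f : Fin (n + 1) → S,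
        (∏ k : Fin (n + 1),
            ((1 - γ * (1 - α k.val)) •
                ((1 - (γ * (1 - α k.val)) • P k.val)⁻¹ * P k.val))
              ((Fin.cons s₀ f : Fin (n + 1 + 1) → S) k.castSucc) (f k)) *
            ∑ k : Fin (n + 1),
              (((1 - γ) / (1 - γ * (1 - α k.val))) *
                  ∏ i ∈ Finset.range k.val,
                    (γ - γ * (1 - α i)) / (1 - γ * (1 - α i))) * r (f k)
      = (gspNMatAux γ α P (n + 1) n).mulVec r s₀ := by
  obtain ⟨hγ0, hγ1⟩ := hγ
  have hβ : ∀ a ∈ Set.Icc (0 : ℝ) 1, 0 ≤ γ * (1 - a) ∧ γ * (1 - a) < 1 := by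
    rintro a ⟨ha0, ha1⟩
    constructor
    · exact mul_nonneg hγ0.le (by linarith)
    · nlinarith
  induction n with
  | zero =>
    intro P hP α hα hαn s₀
    rw [gsp_rec 0 (fun k => (1 - γ * (1 - α k)) • ((1 - (γ * (1 - α k)) • P k)⁻¹ * P k))
      (fun k hk s => gsp_succ_row _ (hP k hk) _ (hβ _ (hα k hk)).1 (hβ _ (hα k hk)).2 s)
      (fun k => (1 - γ) / (1 - γ * (1 - α k)))
      (fun i => (γ - γ * (1 - α i)) / (1 - γ * (1 - α i)))]
    have : 1 - γ ≠ 0 := by linarith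
    simp [hαn, gspNMatAux, Matrix.mulVec, dotProduct, div_self this]
  | succ n ih =>
    intro P hP α hα hαn s₀
    rw [gsp_rec (n + 1) (fun k => (1 - γ * (1 - α k)) • ((1 - (γ * (1 - α k)) • P k)⁻¹ * P k))
      (fun k hk s => gsp_succ_row _ (hP k hk) _ (hβ _ (hα k hk)).1 (hβ _ (hα k hk)).2 s)
      (fun k => (1 - γ) / (1 - γ * (1 - α k)))
      (fun i => (γ - γ * (1 - α i)) / (1 - γ * (1 - α i)))]
    have ih' := ih (fun k => P (k + 1)) (fun k hk => hP (k + 1) (by omega))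
      (fun k => α (k + 1)) (fun k hk => hα (k + 1) (by omega)) hαn
    simp only [ih', gsp_aux_shift γ α P n n le_rfl]
    have hne : 1 - γ * (1 - α 0) ≠ 0 := by
      have := (hβ _ (hα 0 (by omega))).2
      linarith
    have e0 : n + 1 + 1 - 1 - (n + 1) = 0 := by omega
    simp only [gspNMatAux, e0]
    generalize gspNMatAux γ α P (n + 1 + 1) n = N
    rw [Matrix.mul_add, Matrix.mul_smul, Matrix.mul_smul, ← Matrix.mul_assoc, Matrix.add_mulVec,
      Matrix.smul_mulVec, Matrix.smul_mulVec, ← Matrix.mulVec_mulVec r _ N]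
    generalize (1 - (γ * (1 - α 0)) • P 0)⁻¹ * P 0 = A
    generalize N.mulVec r = v
    simp only [Pi.add_apply, Pi.smul_apply, Matrix.smul_apply, smul_eq_mul, Matrix.mulVec,
      dotProduct, Finset.mul_sum]
    rw [← Finset.sum_add_distrib]
    refine Finset.sum_congr rfl fun s _ => ?_
    field_simp
    ring

/-- **Lemma 1 (finite-state form): unbiasedness of the GSP value estimator.** With
row-stochastic `P 0, …, P (n-1)` (0-indexed), `γ ∈ (0,1)`, switching probabilities
`α k ∈ [0,1]` with `α (n-1) = 0`, effective discounts `β k = γ·(1-α k)`, successor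
matrices `M k = (1-β k) • ((1 - β k • P k)⁻¹ * P k)`, GSP weights
`w k = ((1-γ)/(1-β k)) · ∏_{i<k} (γ-β i)/(1-β i)`, and the backward-recursed GSP matrix
`N 0`: for every reward `r` and initial state `s₀`, the expectation over trajectories
`(s_1, …, s_n)` of the chain with transition matrices `M 0, …, M (n-1)` of the estimator
`(1-γ)⁻¹ ∑_k w_k r(s_k)` equals the GSP value `(1-γ)⁻¹ (N 0 r)(s₀)`. -/
theorem stmt_14 {S : Type*} [Fintype S] [DecidableEq S] [Nonempty S]
    (n : ℕ) (hn : 1 ≤ n) (P : ℕ → Matrix S S ℝ) (hP : ∀ k < n, RowStochastic (P k))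
    (γ : ℝ) (hγ : γ ∈ Set.Ioo (0 : ℝ) 1)
    (α : ℕ → ℝ) (hα : ∀ k < n, α k ∈ Set.Icc (0 : ℝ) 1) (hαn : α (n - 1) = 0)
    (r : S → ℝ) (s₀ : S) :
    ∑ f : Fin n → S,
        (∏ k : Fin n,
            ((1 - γ * (1 - α k.val)) •
                ((1 - (γ * (1 - α k.val)) • P k.val)⁻¹ * P k.val))
              ((Fin.cons s₀ f : Fin (n + 1) → S) k.castSucc) (f k)) *
          ((1 - γ)⁻¹ *
            ∑ k : Fin n,
              (((1 - γ) / (1 - γ * (1 - α k.val))) *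
                  ∏ i ∈ Finset.range k.val,
                    (γ - γ * (1 - α i)) / (1 - γ * (1 - α i))) * r (f k))
      = (1 - γ)⁻¹ * (gspNMat γ α P n 0).mulVec r s₀ := by
  obtain ⟨m, rfl⟩ : ∃ m, n = m + 1 := ⟨n - 1, by omega⟩
  have := gsp_main γ hγ r m P hP α hα hαn s₀
  have e : gspNMat γ α P (m + 1) 0 = gspNMatAux γ α P (m + 1) m := rfl
  rw [e, ← this, Finset.mul_sum]
  refine Finset.sum_congr rfl fun f _ => ?_
  rw [mul_left_comm]
end

section
/- (Lemma 3: mixture vector fields and the continuity equation.) Let d ≥ 1, let N ≥ 1, let λ_1, …, λ_N ∈ [0,1] with ∑_i λ_i = 1, and for each i let p_i : ℝ × ℝ^d → ℝ and v_i : ℝ × ℝ^d → ℝ^d. Assume that for every i, t, and x: the map t ↦ p_i(t,x) is differentiable, the map x ↦ p_i(t,x)·v_i(t,x) is differentiable, and the continuity equation ∂_t p_i(t,x) = div_x (p_i(t,·)·v_i(t,·))(x) holds, where div_x g(x) := ∑_{j=1}^d ∂g_j/∂x_j (x) denotes the spatial divergence. Set p(t,x) := ∑_i λ_i p_i(t,x)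 and assume p(t,x) > 0 for all (t,x), and define v(t,x) := p(t,x)⁻¹ · ∑_i λ_i p_i(t,x) · v_i(t,x). Then the mixture pair satisfies the continuity equation: ∂_t p(t,x) = div_x (p(t,·)·v(t,·))(x) for all (t,x). -/
/-- The spatial divergence of a map `g : ℝ^d → ℝ^d` at `x`:
`div g x = ∑_j ∂g_j/∂x_j (x)`, computed from the Fréchet derivative. -/
noncomputable def divergence {d : ℕ}
    (g : EuclideanSpace ℝ (Fin d) → EuclideanSpace ℝ (Fin d))
    (x : EuclideanSpace ℝ (Fin d)) : ℝ :=
  ∑ j : Fin d, fderiv ℝ g x (EuclideanSpace.single j 1) j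

/-- **Lemma 3: mixture vector fields satisfy the continuity equation.** If each pair
`(p_i, v_i)` satisfies the continuity equation `∂_t p_i = div_x (p_i · v_i)` (with the
stated differentiability assumptions), the mixture weights `λ_i ∈ [0,1]` sum to `1`, and
the mixture density `p = ∑_i λ_i p_i` is everywhere positive, then the mixture density
together with the density-weighted mixture vector field
`v(t,x) = p(t,x)⁻¹ • ∑_i λ_i p_i(t,x) • v_i(t,x)` also satisfies the continuity
equation. -/
theorem stmt_15 (d : ℕ) (hd : 1 ≤ d) (N : ℕ) (hN : 1 ≤ N)
    (lam : Fin N → ℝ) (hlam : ∀ i, lam i ∈ Set.Icc (0 : ℝ) 1) (hsum : ∑ i, lam i = 1)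
    (p : Fin N → ℝ → EuclideanSpace ℝ (Fin d) → ℝ)
    (v : Fin N → ℝ → EuclideanSpace ℝ (Fin d) → EuclideanSpace ℝ (Fin d))
    (hpt : ∀ i t x, DifferentiableAt ℝ (fun s => p i s x) t)
    (hpv : ∀ i t x, DifferentiableAt ℝ (fun y => p i t y • v i t y) x)
    (hcont : ∀ i t x,
      deriv (fun s => p i s x) t = divergence (fun y => p i t y • v i t y) x)
    (hpos : ∀ t x, 0 < ∑ i, lam i * p i t x) :
    ∀ t x,
      deriv (fun s => ∑ i, lam i * p i s x) t
        = divergence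
            (fun y =>
              (∑ i, lam i * p i t y) •
                ((∑ i, lam i * p i t y)⁻¹ • ∑ i, (lam i * p i t y) • v i t y)) x := by
  intro t x
  have h1 : HasDerivAt (fun s => ∑ i, lam i * p i s x)
      (∑ i, lam i * deriv (fun s => p i s x) t) t :=
    HasDerivAt.fun_sum fun i _ => (hpt i t x).hasDerivAt.const_mul (lam i)
  have h2 : HasFDerivAt (fun y => ∑ i, lam i • (p i t y • v i t y))
      (∑ i, lam i • fderiv ℝ (fun y => p i t y • v i t y) x) x :=
    HasFDerivAt.fun_sum fun i _ => (hpv i t x).hasFDerivAt.const_smul (lam i)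
  have h3 : (fun y => (∑ i, lam i * p i t y) •
      ((∑ i, lam i * p i t y)⁻¹ • ∑ i, (lam i * p i t y) • v i t y))
      = fun y => ∑ i, lam i • (p i t y • v i t y) := by
    funext y
    rw [smul_inv_smul₀ (hpos t y).ne']
    simp only [mul_smul]
  rw [h3, h1.deriv]
  unfold divergence
  rw [h2.fderiv]
  simp only [hcont, divergence, Finset.mul_sum]
  rw [Finset.sum_comm]
  simp
end
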